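/- Let n ≥ 1, let Ω ⊆ ℝⁿ be a nonempty open set, and let F : ℝⁿ → ℂ be continuous on the difference set Ω − Ω = {x − y : x, y ∈ Ω}. Then F is positive definite on Ω if and only if for every smooth compactly supported function φ : ℝⁿ → ℂ whose support is contained in Ω, the double integral ∫_Ω ∫_Ω conj(φ(x)) · φ(y) · F(x − y) dx dy has zero imaginary part and nonnegative real part. -/

import Mathlib

open MeasureTheory Complex Pointwise

noncomputable section

/-- `F` is positive definite on `Ω`: all finite quadratic forms built from the kernel
`(x, y) ↦ F (x - y)` with nodes in `Ω` are real and nonnegative. -/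
def PosDefOn {n : ℕ} (Ω : Set (EuclideanSpace ℝ (Fin n)))
    (F : EuclideanSpace ℝ (Fin n) → ℂ) : Prop :=
  ∀ (N : ℕ) (x : Fin N → EuclideanSpace ℝ (Fin n)) (c : Fin N → ℂ),
    (∀ i, x i ∈ Ω) →
      (∑ i, ∑ j, (starRingEnd ℂ) (c i) * c j * F (x i - x j)).im = 0 ∧
      0 ≤ (∑ i, ∑ j, (starRingEnd ℂ) (c i) * c j * F (x i - x j)).re

/-!
A continuous positive semidefinite kernel which is bounded on a finite measure space has nonnegative
double integral: replacing both variables by values of a simple function turns this integral into a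
finite quadratic form, and simple functions converge pointwise to the identity. For a test function
`φ` supported in `Ω`, this applies to the kernel `conj (φ x) * φ y * F (x - y)` on the compact
support of `φ`.

Conversely, testing against `∑ i, c i * φ i`, where `φ i` is a smooth bump of integral one
concentrating at `x i`, the double integral tends to `∑ i, ∑ j, conj (c i) * c j * F (x i - x j)`.
-/

open Set Filter Topology TopologicalSpace
open scoped ComplexOrder ComplexConjugate CompactlySupported Distributions

section PosSemidef

variable {X : Type*} {K : Matrix X X ℂ}

theorem sum_nonneg_of_posSemidef (hK : K.PosSemidef) {ι : Type*} [Fintype ι] (x : ι → X)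
    (c : ι → ℂ) : 0 ≤ ∑ i, ∑ j, conj (c i) * c j * K (x i) (x j) := by
  have h := (hK.submatrix x).dotProduct_mulVec_nonneg c
  simp only [dotProduct, Matrix.mulVec, Matrix.submatrix_apply, Finset.mul_sum] at h
  refine h.trans_eq <| Finset.sum_congr rfl fun i _ ↦ Finset.sum_congr rfl fun j _ ↦ ?_
  rw [Pi.star_apply, RCLike.star_def]
  ring

-- The weights `(1, 1)` and `(1, I)` determine the sum and the difference of `K x y` and `K y x`.
theorem isHermitian_of_forall_pair_sum_nonneg
    (h : ∀ (x : Fin 2 → X) (c : Fin 2 → ℂ), 0 ≤ ∑ i, ∑ j, conj (c i) * c j * K (x i) (x j)) :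
    K.IsHermitian := by
  refine Matrix.IsHermitian.ext fun x y ↦ ?_
  have hx : 0 = (K x x).im := by simpa using (Complex.nonneg_iff.1 (h ![x, x] ![1, 0])).2
  have hy : 0 = (K y y).im := by simpa using (Complex.nonneg_iff.1 (h ![y, y] ![1, 0])).2
  have hsum : 0 = (K x x).im + (K x y).im + ((K y x).im + (K y y).im) := by
    simpa [Fin.sum_univ_two] using (Complex.nonneg_iff.1 (h ![x, y] ![1, 1])).2
  have hdiff : 0 = (K x x).im + (K x y).re + (-(K y x).re + (K y y).im) := by
    simpa [Fin.sum_univ_two] using (Complex.nonneg_iff.1 (h ![x, y] ![1, I])).2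
  apply Complex.ext
  · rw [RCLike.star_def, conj_re]
    linarith
  · rw [RCLike.star_def, conj_im]
    linarith

theorem posSemidef_iff_forall_sum_nonneg :
    K.PosSemidef ↔ ∀ (N : ℕ) (x : Fin N → X) (c : Fin N → ℂ),
      0 ≤ ∑ i, ∑ j, conj (c i) * c j * K (x i) (x j) := by
  refine ⟨fun hK N x c ↦ sum_nonneg_of_posSemidef hK x c,
    fun h ↦ ⟨isHermitian_of_forall_pair_sum_nonneg (h 2), fun c ↦ ?_⟩⟩
  let e := c.support.equivFin.symm
  convert h _ (fun i ↦ (e i : X)) (fun i ↦ c (e i)) using 1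
  rw [e.sum_comp fun a ↦ ∑ j, conj (c a) * c (e j) * K a (e j), Finsupp.sum,
    ← Finset.sum_coe_sort]
  refine Finset.sum_congr rfl fun a _ ↦ ?_
  rw [e.sum_comp fun b ↦ conj (c a) * c b * K a b, Finsupp.sum, ← Finset.sum_coe_sort]
  exact Finset.sum_congr rfl fun b _ ↦ mul_right_comm _ _ _

theorem posSemidef_conj_mul_mul (hK : K.PosSemidef) (f : X → ℂ) :
    (Matrix.of fun x y ↦ conj (f x) * f y * K x y).PosSemidef := by
  refine posSemidef_iff_forall_sum_nonneg.2 fun N x c ↦ ?_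
  refine (sum_nonneg_of_posSemidef hK x fun i ↦ c i * f (x i)).trans_eq <|
    Finset.sum_congr rfl fun i _ ↦ Finset.sum_congr rfl fun j _ ↦ ?_
  rw [map_mul, Matrix.of_apply]
  ring

theorem posDefOn_iff_posSemidef {n : ℕ} {Ω : Set (EuclideanSpace ℝ (Fin n))}
    {F : EuclideanSpace ℝ (Fin n) → ℂ} :
    PosDefOn Ω F ↔ (Matrix.of fun x y : Ω ↦ F (x - y)).PosSemidef := by
  simp only [posSemidef_iff_forall_sum_nonneg, Complex.nonneg_iff, Matrix.of_apply]
  refine ⟨fun h N x c ↦ ?_, fun h N x c hx ↦ ?_⟩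
  · exact (h N (fun i ↦ x i) c fun i ↦ (x i).2).symm.imp_right Eq.symm
  · exact (h N (fun i ↦ ⟨x i, hx i⟩) c).symm.imp_left Eq.symm

end PosSemidef

section FiniteMeasure

variable {X Y : Type*} [MeasurableSpace X]

theorem integral_integral_nonneg_of_finite [Finite X] [MeasurableSingletonClass X]
    (μ : Measure X) [IsFiniteMeasure μ] {K : Matrix X X ℂ} (hK : K.PosSemidef) :
    0 ≤ ∫ x, ∫ y, K x y ∂μ ∂μ := by
  have := Fintype.ofFinite X
  simp only [integral_fintype .of_finite, Finset.smul_sum]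
  convert sum_nonneg_of_posSemidef hK id (fun x ↦ (μ.real {x} : ℂ)) using 4
  simp only [real_smul, conj_ofReal, id]
  ring

theorem integral_integral_simpleFunc_nonneg (μ : Measure X) [IsFiniteMeasure μ]
    {K : Matrix Y Y ℂ} (hK : K.PosSemidef) (s : SimpleFunc X Y) :
    0 ≤ ∫ x, ∫ y, K (s x) (s y) ∂μ ∂μ := by
  let : MeasurableSpace Y := ⊤
  let r (x : X) : s.range := ⟨s x, s.mem_range_self x⟩
  have hr : Measurable r := s.measurable.subtype_mk
  have h := integral_integral_nonneg_of_finite (μ.map r) (hK.submatrix Subtype.val)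
  rw [integral_map hr.aemeasurable .of_discrete] at h
  simpa only [integral_map hr.aemeasurable .of_discrete, Matrix.submatrix_apply] using h

theorem integral_integral_nonneg_of_bounded [TopologicalSpace X] [PseudoMetrizableSpace X]
    [SecondCountableTopology X] [OpensMeasurableSpace X] (μ : Measure X) [IsFiniteMeasure μ]
    {K : Matrix X X ℂ} (hK : K.PosSemidef) (hcont : Continuous fun p : X × X ↦ K p.1 p.2)
    {C : ℝ} (hC : ∀ x y, ‖K x y‖ ≤ C) : 0 ≤ ∫ x, ∫ y, K x y ∂μ ∂μ := by
  have hid := stronglyMeasurable_id (α := X)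
  have hmeas (n : ℕ) : StronglyMeasurable fun p : X × X ↦ K (hid.approx n p.1) (hid.approx n p.2) :=
    hcont.comp_stronglyMeasurable <|
      ((hid.approx n).stronglyMeasurable.comp_measurable measurable_fst).prodMk
        ((hid.approx n).stronglyMeasurable.comp_measurable measurable_snd)
  have hlim : Tendsto (fun n ↦ ∫ p, K (hid.approx n p.1) (hid.approx n p.2) ∂μ.prod μ) atTop
      (𝓝 (∫ p, K p.1 p.2 ∂μ.prod μ)) :=
    tendsto_integral_of_dominated_convergence (fun _ ↦ C)
      (fun n ↦ (hmeas n).aestronglyMeasurable) (integrable_const C)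
      (fun n ↦ .of_forall fun p ↦ hC _ _)
      (.of_forall fun p ↦ (hcont.tendsto p).comp <|
        (hid.tendsto_approx p.1).prodMk_nhds (hid.tendsto_approx p.2))
  rw [← integral_prod (fun p : X × X ↦ K p.1 p.2) <|
    .of_bound hcont.aestronglyMeasurable C (.of_forall fun p ↦ hC _ _)]
  refine ge_of_tendsto' hlim fun n ↦ ?_
  rw [integral_prod _ <|
    .of_bound (hmeas n).aestronglyMeasurable C (.of_forall fun p ↦ hC _ _)]
  exact integral_integral_simpleFunc_nonneg μ hK (hid.approx n)

end FiniteMeasure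

section KernelForm

variable {X : Type*} [TopologicalSpace X]

theorem continuous_conj_mul_mul (K : C(X × X, ℂ)) (f g : C_c(X, ℂ)) :
    Continuous fun p : X × X ↦ conj (f p.1) * g p.2 * K p :=
  (((continuous_conj.comp f.continuous).comp continuous_fst).mul
    (g.continuous.comp continuous_snd)).mul K.continuous

theorem hasCompactSupport_conj_mul_mul (K : C(X × X, ℂ)) (f g : C_c(X, ℂ)) :
    HasCompactSupport fun p : X × X ↦ conj (f p.1) * g p.2 * K p := by
  refine .intro' (f.hasCompactSupport.isCompact.prod g.hasCompactSupport.isCompact)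
    ((isClosed_tsupport f).prod (isClosed_tsupport g)) fun p hp ↦ ?_
  rcases not_and_or.1 hp with h | h <;> simp [image_eq_zero_of_notMem_tsupport h]

variable [MeasurableSpace X] [SecondCountableTopology X] [OpensMeasurableSpace X] {μ : Measure X}
  [IsFiniteMeasureOnCompacts μ] [SFinite μ] {K : C(X × X, ℂ)} {f g : C_c(X, ℂ)}

theorem integrable_conj_mul_mul (μ : Measure X) [IsFiniteMeasureOnCompacts μ] [SFinite μ]
    (K : C(X × X, ℂ)) (f g : C_c(X, ℂ)) :
    Integrable (fun p : X × X ↦ conj (f p.1) * g p.2 * K p) (μ.prod μ) :=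
  (continuous_conj_mul_mul K f g).integrable_of_hasCompactSupport
    (hasCompactSupport_conj_mul_mul K f g)

/-- The sesquilinear form `(f, g) ↦ ∫∫ conj (f x) * g y * K (x, y)` of a continuous kernel `K`,
written as an integral over the product measure. -/
def kernelForm (μ : Measure X) [IsFiniteMeasureOnCompacts μ] [SFinite μ] (K : C(X × X, ℂ)) :
    C_c(X, ℂ) →ₗ⋆[ℂ] C_c(X, ℂ) →ₗ[ℂ] ℂ :=
  LinearMap.mk₂'ₛₗ _ _ (fun f g ↦ ∫ p : X × X, conj (f p.1) * g p.2 * K p ∂μ.prod μ)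
    (fun f₁ f₂ g ↦ by
      rw [← integral_add (integrable_conj_mul_mul μ K f₁ g) (integrable_conj_mul_mul μ K f₂ g)]
      simp [add_mul])
    (fun c f g ↦ by simp [← integral_const_mul, mul_assoc])
    (fun f g₁ g₂ ↦ by
      rw [← integral_add (integrable_conj_mul_mul μ K f g₁) (integrable_conj_mul_mul μ K f g₂)]
      simp [add_mul, mul_add])
    (fun c f g ↦ by simp [← integral_const_mul, mul_assoc, mul_left_comm])

theorem kernelForm_apply :
    kernelForm μ K f g = ∫ p : X × X, conj (f p.1) * g p.2 * K p ∂μ.prod μ := rfl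

theorem kernelForm_eq_integral_integral :
    kernelForm μ K f g = ∫ x, ∫ y, conj (f x) * g y * K (x, y) ∂μ ∂μ :=
  integral_prod _ (integrable_conj_mul_mul μ K f g)

theorem kernelForm_self_nonneg [PseudoMetrizableSpace X]
    (hK : (Matrix.of fun x y ↦ K (x, y)).PosSemidef) : 0 ≤ kernelForm μ K f f := by
  obtain ⟨C, hC⟩ : ∃ C, ∀ p : X × X, ‖conj (f p.1) * f p.2 * K p‖ ≤ C :=
    (continuous_conj_mul_mul K f f).bounded_above_of_compact_support
      (hasCompactSupport_conj_mul_mul K f f)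
  have : IsFiniteMeasure (μ.restrict (tsupport f)) :=
    isFiniteMeasure_restrict.2 f.hasCompactSupport.isCompact.measure_ne_top
  convert integral_integral_nonneg_of_bounded (μ.restrict (tsupport f))
    (posSemidef_conj_mul_mul hK f) (continuous_conj_mul_mul K f f) fun x y ↦ hC (x, y) using 1
  simp only [Matrix.of_apply]
  rw [kernelForm_eq_integral_integral, setIntegral_eq_integral_of_forall_compl_eq_zero]
  · congr! 2 with x
    refine (setIntegral_eq_integral_of_forall_compl_eq_zero fun y hy ↦ ?_).symm
    simp [image_eq_zero_of_notMem_tsupport hy]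
  · intro x hx
    simp [image_eq_zero_of_notMem_tsupport hx]

end KernelForm

section DiracFamily

theorem norm_integral_mul_sub_le {X 𝕜 : Type*} [RCLike 𝕜] [MeasurableSpace X] {μ : Measure X}
    {w K : X → 𝕜} {z : 𝕜} {ε : ℝ} (hw : ∫ x, w x ∂μ = 1) (hw_norm : ∫ x, ‖w x‖ ∂μ = 1)
    (hwK : Integrable (fun x ↦ w x * K x) μ) (hK : ∀ x, w x ≠ 0 → ‖K x - z‖ ≤ ε) :
    ‖(∫ x, w x * K x ∂μ) - z‖ ≤ ε := by
  have hw_int : Integrable w μ := .of_integral_ne_zero (hw ▸ one_ne_zero)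
  have hbound (x : X) : ‖w x * (K x - z)‖ ≤ ‖w x‖ * ε := by
    rcases eq_or_ne (w x) 0 with h | h
    · simp [h]
    · exact (norm_mul _ _).trans_le (mul_le_mul_of_nonneg_left (hK x h) (norm_nonneg _))
  calc ‖(∫ x, w x * K x ∂μ) - z‖
      = ‖∫ x, w x * (K x - z) ∂μ‖ := by
        simp_rw [mul_sub]
        rw [integral_sub hwK (hw_int.mul_const z), integral_mul_const, hw, one_mul]
    _ ≤ ∫ x, ‖w x‖ * ε ∂μ :=
        norm_integral_le_of_norm_le (hw_int.norm.mul_const ε) (.of_forall hbound)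
    _ = ε := by rw [integral_mul_const, hw_norm, one_mul]

variable {X ι : Type*} [TopologicalSpace X] [MeasurableSpace X]

/-- A family of compactly supported continuous functions of integral and `L¹` norm one which
concentrates at `a` along the filter `l`, i.e. an approximation of the Dirac mass at `a`. -/
structure IsDiracFamily (μ : Measure X) (l : Filter ι) (u : ι → C_c(X, ℂ)) (a : X) : Prop where
  integral_eq_one (i : ι) : ∫ x, u i x ∂μ = 1
  integral_norm_eq_one (i : ι) : ∫ x, ‖u i x‖ ∂μ = 1
  tendsto_support : Tendsto (fun i ↦ Function.support (u i)) l (𝓝 a).smallSets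

variable [SecondCountableTopology X] [OpensMeasurableSpace X] {μ : Measure X}
  [IsFiniteMeasureOnCompacts μ] [SFinite μ] {l : Filter ι} {u v : ι → C_c(X, ℂ)} {a b : X}

theorem IsDiracFamily.tendsto_kernelForm (hu : IsDiracFamily μ l u a)
    (hv : IsDiracFamily μ l v b) (K : C(X × X, ℂ)) :
    Tendsto (fun i ↦ kernelForm μ K (u i) (v i)) l (𝓝 (K (a, b))) := by
  refine Metric.nhds_basis_closedBall.tendsto_right_iff.2 fun ε hε ↦ ?_
  obtain ⟨U, hU, V, hV, hUV⟩ := mem_nhds_prod_iff.1 <|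
    K.continuous.continuousAt.preimage_mem_nhds (Metric.closedBall_mem_nhds (K (a, b)) hε)
  filter_upwards [tendsto_smallSets_iff.1 hu.tendsto_support U hU,
    tendsto_smallSets_iff.1 hv.tendsto_support V hV] with i hi hj
  rw [mem_closedBall_iff_norm, kernelForm_apply]
  refine norm_integral_mul_sub_le ?_ ?_ (integrable_conj_mul_mul μ K _ _) fun p hp ↦ ?_
  · rw [integral_prod_mul (fun x ↦ conj (u i x)), integral_conj, hu.integral_eq_one,
      hv.integral_eq_one, map_one, one_mul]
  · simp only [norm_mul, RCLike.norm_conj]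
    rw [integral_prod_mul (fun x ↦ ‖u i x‖) fun y ↦ ‖v i y‖, hu.integral_norm_eq_one,
      hv.integral_norm_eq_one, one_mul]
  · simp only [ne_eq, mul_eq_zero, map_eq_zero, not_or] at hp
    exact mem_closedBall_iff_norm.1 (hUV ⟨hi hp.1, hj hp.2⟩)

theorem posSemidef_of_kernelForm_self_nonneg {K : C(X × X, ℂ)} {S : Submodule ℂ C_c(X, ℂ)}
    (hS : ∀ f ∈ S, 0 ≤ kernelForm μ K f f)
    (hDirac : ∀ a, ∃ u : ℕ → C_c(X, ℂ), (∀ k, u k ∈ S) ∧ IsDiracFamily μ atTop u a) :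
    (Matrix.of fun x y ↦ K (x, y)).PosSemidef := by
  choose u huS hu using hDirac
  refine posSemidef_iff_forall_sum_nonneg.2 fun N x c ↦ ?_
  have hlim : Tendsto (fun k ↦ ∑ i, ∑ j, conj (c i) * c j * kernelForm μ K (u (x i) k) (u (x j) k))
      atTop (𝓝 (∑ i, ∑ j, conj (c i) * c j * K (x i, x j))) :=
    tendsto_finsetSum _ fun i _ ↦ tendsto_finsetSum _ fun j _ ↦
      ((hu (x i)).tendsto_kernelForm (hu (x j)) K).const_mul _
  refine ge_of_tendsto' hlim fun k ↦ ?_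
  convert hS (∑ i, c i • u (x i) k) (S.sum_mem fun i _ ↦ S.smul_mem _ (huS _ k)) using 1
  simp only [map_sum, LinearMap.sum_apply, map_smulₛₗ, LinearMap.smul_apply, smul_eq_mul,
    RingHom.id_apply, Finset.mul_sum]
  rw [Finset.sum_comm]
  exact Finset.sum_congr rfl fun i _ ↦ Finset.sum_congr rfl fun j _ ↦ by ring

end DiracFamily

section OpenSubspace

variable {E : Type*} [TopologicalSpace E] [MeasurableSpace E] {μ : Measure E} {Ω : Opens E}

theorem integral_opens_comap [OpensMeasurableSpace E] {F : Type*} [NormedAddCommGroup F]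
    [NormedSpace ℝ F] (f : E → F) : ∫ x : Ω, f x ∂μ.comap (↑) = ∫ x in Ω, f x ∂μ :=
  integral_subtype_comap Ω.isOpen.measurableSet f

instance isFiniteMeasureOnCompacts_comap_opens [OpensMeasurableSpace E]
    [IsFiniteMeasureOnCompacts μ] : IsFiniteMeasureOnCompacts (μ.comap ((↑) : Ω → E)) :=
  .comap' μ continuous_subtype_val (.subtype_coe Ω.isOpen.measurableSet)

instance sigmaFinite_comap_opens [OpensMeasurableSpace E] [LocallyCompactSpace E]
    [SecondCountableTopology E] [IsFiniteMeasureOnCompacts μ] :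
    SigmaFinite (μ.comap ((↑) : Ω → E)) :=
  have := Ω.isOpen.locallyCompactSpace
  inferInstance

end OpenSubspace

section TestFunction

variable {E : Type*} [NormedAddCommGroup E] [NormedSpace ℝ E] {Ω : Opens E}

/-- The restriction of test functions on `E` supported in `Ω` to the open subspace `Ω`. -/
def testFunctionRestrict : 𝓓(Ω, ℂ) →ₗ[ℂ] C_c(Ω, ℂ) where
  toFun φ :=
    { toFun x := φ x
      continuous_toFun := φ.continuous.comp continuous_subtype_val
      hasCompactSupport' := by
        have hcpt : IsCompact ((↑) ⁻¹' tsupport φ : Set Ω) :=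
          (IsInducing.subtypeVal.isCompact_preimage_iff
            (by simpa using φ.tsupport_subset)).2 φ.hasCompactSupport
        exact .intro' hcpt ((isClosed_tsupport φ).preimage continuous_subtype_val) fun x hx ↦
          image_eq_zero_of_notMem_tsupport (f := φ) hx }
  map_add' _ _ := by ext; simp
  map_smul' _ _ := by ext; simp

theorem testFunctionRestrict_apply (φ : 𝓓(Ω, ℂ)) (x : Ω) : testFunctionRestrict φ x = φ x := rfl

variable [MeasurableSpace E] [BorelSpace E] [FiniteDimensional ℝ E] {μ : Measure E}
  [IsLocallyFiniteMeasure μ]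

theorem kernelForm_testFunctionRestrict (K : C(Ω × Ω, ℂ)) {k : E → E → ℂ}
    (hk : ∀ x y : Ω, K (x, y) = k x y) (φ : 𝓓(Ω, ℂ)) :
    kernelForm (μ.comap (↑)) K (testFunctionRestrict φ) (testFunctionRestrict φ) =
      ∫ x in Ω, ∫ y in Ω, conj (φ x) * φ y * k x y ∂μ ∂μ := by
  simp only [kernelForm_eq_integral_integral, testFunctionRestrict_apply, hk,
    ← integral_opens_comap]

variable [μ.IsOpenPosMeasure]

/-- The `L¹`-normalised bump `b`, as a test function. -/
def bumpTestFunction (μ : Measure E) [IsLocallyFiniteMeasure μ] [μ.IsOpenPosMeasure] {a : E}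
    (b : ContDiffBump a) (hb : Metric.closedBall a b.rOut ⊆ Ω) : 𝓓(Ω, ℂ) where
  toFun x := (b.normed μ x : ℂ)
  contDiff' := ofRealCLM.contDiff.comp b.contDiff_normed
  hasCompactSupport' := b.hasCompactSupport_normed.comp_left ofReal_zero
  tsupport_subset' := (tsupport_comp_subset ofReal_zero _).trans <|
    b.tsupport_normed_eq.trans_subset hb

theorem bumpTestFunction_apply {a : E} (b : ContDiffBump a)
    (hb : Metric.closedBall a b.rOut ⊆ Ω) (x : E) :
    bumpTestFunction μ b hb x = b.normed μ x := rfl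

theorem isDiracFamily_bumpTestFunction {ι : Type*} {l : Filter ι} {a : Ω}
    (b : ι → ContDiffBump (a : E)) (hb : ∀ i, Metric.closedBall (a : E) (b i).rOut ⊆ Ω)
    (hlim : Tendsto (fun i ↦ (b i).rOut) l (𝓝 0)) :
    IsDiracFamily (μ.comap ((↑) : Ω → E)) l
      (fun i ↦ testFunctionRestrict (bumpTestFunction μ (b i) (hb i))) a := by
  have hint (i : ι) : ∫ x : Ω, (b i).normed μ x ∂μ.comap (↑) = 1 := by
    rw [integral_opens_comap, setIntegral_eq_integral_of_forall_compl_eq_zero,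
      (b i).integral_normed]
    refine fun x hx ↦ image_eq_zero_of_notMem_tsupport fun hx' ↦ hx (hb i ?_)
    rwa [(b i).tsupport_normed_eq] at hx'
  refine ⟨fun i ↦ ?_, fun i ↦ ?_, ?_⟩
  · simp only [testFunctionRestrict_apply, bumpTestFunction_apply]
    rw [integral_complex_ofReal, hint, ofReal_one]
  · simp only [testFunctionRestrict_apply, bumpTestFunction_apply, norm_real,
      Real.norm_of_nonneg ((b i).nonneg_normed _), hint]
  · refine tendsto_smallSets_iff.2 fun t ht ↦ ?_
    obtain ⟨s, hs, hst⟩ := (mem_nhds_subtype _ _ _).1 ht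
    filter_upwards [tendsto_smallSets_iff.1
      (ContDiffBump.tendsto_support_normed_smallSets (μ := μ) hlim) s hs] with i hi x hx
    exact hst (hi (ofReal_ne_zero.1 hx))

theorem exists_isDiracFamily_testFunction (μ : Measure E) [IsLocallyFiniteMeasure μ]
    [μ.IsOpenPosMeasure] (a : Ω) : ∃ φ : ℕ → 𝓓(Ω, ℂ),
      IsDiracFamily (μ.comap ((↑) : Ω → E)) atTop (fun k ↦ testFunctionRestrict (φ k)) a := by
  obtain ⟨ε, hε, hball⟩ := Metric.nhds_basis_closedBall.mem_iff.1 (Ω.isOpen.mem_nhds a.2)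
  obtain ⟨r, -, hr, hlim⟩ := exists_seq_strictAnti_tendsto' hε
  let b (k : ℕ) : ContDiffBump (a : E) := ⟨r k / 2, r k, half_pos (hr k).1, half_lt_self (hr k).1⟩
  exact ⟨_, isDiracFamily_bumpTestFunction b
    (fun k ↦ (Metric.closedBall_subset_closedBall (hr k).2.le).trans hball) hlim⟩

end TestFunction

theorem stmt_0_general {E : Type*} [NormedAddCommGroup E] [NormedSpace ℝ E]
    [FiniteDimensional ℝ E] [MeasurableSpace E] [BorelSpace E] (μ : Measure E)
    [IsLocallyFiniteMeasure μ] [μ.IsOpenPosMeasure] {Ω : Set E} (hΩ : IsOpen Ω) {K : E → E → ℂ}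
    (hK : ContinuousOn (fun p : E × E ↦ K p.1 p.2) (Ω ×ˢ Ω)) :
    (Matrix.of fun x y : Ω ↦ K x y).PosSemidef ↔
      ∀ φ : E → ℂ, ContDiff ℝ (⊤ : ℕ∞) φ → HasCompactSupport φ → tsupport φ ⊆ Ω →
        0 ≤ ∫ x in Ω, ∫ y in Ω, conj (φ x) * φ y * K x y ∂μ ∂μ := by
  lift Ω to Opens E using hΩ
  let κ : C(Ω × Ω, ℂ) := ⟨fun p ↦ K p.1 p.2, hK.comp_continuous
    (continuous_subtype_val.prodMap continuous_subtype_val) fun p ↦ ⟨p.1.2, p.2.2⟩⟩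
  have hκ := kernelForm_testFunctionRestrict (μ := μ) κ (k := K) fun _ _ ↦ rfl
  refine ⟨fun h φ hsmooth hcpt hsupp ↦ ?_, fun h ↦ ?_⟩
  · exact (kernelForm_self_nonneg h).trans_eq (hκ ⟨φ, hsmooth, hcpt, hsupp⟩)
  · refine posSemidef_of_kernelForm_self_nonneg (μ := μ.comap (↑)) (K := κ)
      (S := testFunctionRestrict.range) ?_ fun a ↦ ?_
    · rintro _ ⟨φ, rfl⟩
      exact (h φ φ.contDiff φ.hasCompactSupport φ.tsupport_subset).trans_eq (hκ φ).symm
    · obtain ⟨φ, hφ⟩ := exists_isDiracFamily_testFunction μ a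
      exact ⟨_, fun k ↦ ⟨φ k, rfl⟩, hφ⟩

theorem stmt_0 (n : ℕ) (hn : 1 ≤ n) (Ω : Set (EuclideanSpace ℝ (Fin n)))
    (hne : Ω.Nonempty) (hop : IsOpen Ω)
    (F : EuclideanSpace ℝ (Fin n) → ℂ)
    (hF : ContinuousOn F (Ω - Ω)) :
    PosDefOn Ω F ↔
      ∀ φ : EuclideanSpace ℝ (Fin n) → ℂ,
        ContDiff ℝ (⊤ : ℕ∞) φ → HasCompactSupport φ → tsupport φ ⊆ Ω →
        (∫ x in Ω, ∫ y in Ω, (starRingEnd ℂ) (φ x) * φ y * F (x - y)).im = 0 ∧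
        0 ≤ (∫ x in Ω, ∫ y in Ω, (starRingEnd ℂ) (φ x) * φ y * F (x - y)).re := by
  have hK : ContinuousOn (fun p : _ × _ ↦ F (p.1 - p.2)) (Ω ×ˢ Ω) :=
    hF.comp (by fun_prop) fun p hp ↦ Set.sub_mem_sub hp.1 hp.2
  simpa only [posDefOn_iff_posSemidef, Complex.nonneg_iff, and_comm, eq_comm] using
    stmt_0_general volume hop (K := fun x y ↦ F (x - y)) hK
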